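/- Let α ≥ 1 be odd, let c = (α+2)² − (α+2) + 2, and let S be a binary matrix with pairwise distinct rows that contains the all-zero vector as a row and in which every pairwise row Hamming distance lies in {α, α+1, α+2}. Let n_ω denote the number of rows of weight ω. Then: (i) if n_α ≥ c, then n_{α+2} = 0; and (ii) if moreover α ≥ 3 and S has no inessential column, then it is not the case that both n_α ≥ c and n_{α+1} ≥ c. -/

import Mathlib

/-!
Write `α = 2t - 1`. Two rows of weight `α` have even distance, hence distance `α + 1 = 2t`, so their
supports meet in exactly `t - 1` columns. A large family of `(l + t)`-sets with all pairwise
intersections of size `l` has a common core of size `l` (`exists_core`, a version of Deza's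
theorem), hence is a sunflower; this applies to the rows of weight `α`.

The core is found through column degrees. A variance computation (`degree_mul_le`) shows that a
column of degree `e` in a family of `m` sets satisfies `e (m - e) ≤ t m`, so for large `m` either
`e ≤ t` or `e ≥ m - t`; the columns of the second kind form the core.

(i) A row of weight `α + 2` would meet each support of weight `α` in `t` columns, hence meet each of
the disjoint petals, of which there are more than `α + 2`.

(ii) Let `K` be the core of the rows of weight `α`. A support of weight `α + 1` misses some petal
but meets every support of weight `α` in at least `t - 1 = |K|` columns, hence contains `K`. By (i)
every nonzero row has weight `α` or `α + 1`, so a column of `K` (which exists as `α ≥ 3`) separates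
exactly the zero row from the others; as all distances exceed `1`, it is inessential.
-/

/-- The support of row `i`: the set of columns where the binary matrix `S` has a 1. -/
def rowSupport {n d : ℕ} (S : Fin n → Fin d → Bool) (i : Fin n) : Finset (Fin d) :=
  Finset.univ.filter fun c => S i c = true

/-- A column `j` of a binary matrix is inessential if (1) it exactly distinguishes
some row `i` from all other rows, and (2) the rows remain pairwise distinct after
deleting column `j`. -/
def Inessential {n d : ℕ} (S : Fin n → Fin d → Bool) (j : Fin d) : Prop :=
  (∃ i : Fin n, (∀ l, l ≠ i → S i j ≠ S l j) ∧ ∀ l l', l ≠ i → l' ≠ i → S l j = S l' j) ∧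
  (∀ i i' : Fin n, i ≠ i' → ∃ c : Fin d, c ≠ j ∧ S i c ≠ S i' c)

/-- If `W i` are `(l + t)`-sets with pairwise intersections of size `l`, then the quadratic form
`‖∑ i, c i • 1_{W i}‖²` is diagonal up to a multiple of the square of the sum of the coefficients. -/
lemma sum_sq_eq {ι V : Type*} [DecidableEq ι] [DecidableEq V] [Fintype V]
    (I : Finset ι) (W : ι → Finset V) (l t : ℕ)
    (hcard : ∀ i ∈ I, (W i).card = l + t)
    (hint : ∀ i ∈ I, ∀ j ∈ I, i ≠ j → (W i ∩ W j).card = l) (c : ι → ℤ) :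
    ∑ y : V, (∑ i ∈ I, if y ∈ W i then c i else 0) ^ 2
      = l * (∑ i ∈ I, c i) ^ 2 + t * ∑ i ∈ I, c i ^ 2 := by
  have h1 : ∀ y : V, (∑ i ∈ I, if y ∈ W i then c i else 0) ^ 2
      = ∑ i ∈ I, ∑ j ∈ I, if y ∈ W i ∩ W j then c i * c j else 0 := by
    intro y
    rw [sq, Finset.sum_mul_sum]
    refine Finset.sum_congr rfl fun i _ => Finset.sum_congr rfl fun j _ => ?_
    by_cases hi : y ∈ W i <;> by_cases hj : y ∈ W j <;> simp [hi, hj]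
  have h2 : ∀ i ∈ I, ∀ j ∈ I, (∑ y : V, if y ∈ W i ∩ W j then c i * c j else 0)
      = l * (c i * c j) + if i = j then t * (c i * c j) else 0 := by
    intro i hi j hj
    rw [← Finset.sum_filter, Finset.sum_const, Finset.filter_mem_eq_inter, Finset.univ_inter]
    by_cases hij : i = j
    · subst hij
      simp [hcard i hi]
      ring
    · simp [hint i hi j hj hij, hij]
  calc ∑ y : V, (∑ i ∈ I, if y ∈ W i then c i else 0) ^ 2
      = ∑ i ∈ I, ∑ j ∈ I, ∑ y : V, if y ∈ W i ∩ W j then c i * c j else 0 := by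
        simp_rw [h1]
        rw [Finset.sum_comm]
        exact Finset.sum_congr rfl fun i _ => Finset.sum_comm
    _ = ∑ i ∈ I, ∑ j ∈ I, (l * (c i * c j) + if i = j then t * (c i * c j) else 0) :=
        Finset.sum_congr rfl fun i hi => Finset.sum_congr rfl fun j hj => h2 i hi j hj
    _ = l * (∑ i ∈ I, c i) ^ 2 + t * ∑ i ∈ I, c i ^ 2 := by
        simp_rw [Finset.sum_add_distrib]
        congr 1
        · rw [sq, Finset.sum_mul_sum, Finset.mul_sum]
          exact Finset.sum_congr rfl fun i _ => by rw [Finset.mul_sum]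
        · rw [Finset.mul_sum]
          refine Finset.sum_congr rfl fun i hi => ?_
          rw [Finset.sum_ite_eq, if_pos hi, sq]

/-- The degree `e` of a point `x` satisfies `e (m - e) ≤ t m`: compare the coordinate at `x` of the
vector `(m - e) ∑_{x ∈ W i} 1_{W i} - e ∑_{x ∉ W i} 1_{W i}` with its norm. -/
lemma degree_mul_le {ι V : Type*} [DecidableEq ι] [DecidableEq V] [Fintype V]
    (I : Finset ι) (W : ι → Finset V) (l t : ℕ)
    (hcard : ∀ i ∈ I, (W i).card = l + t)
    (hint : ∀ i ∈ I, ∀ j ∈ I, i ≠ j → (W i ∩ W j).card = l) (x : V) :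
    ((I.filter fun i => x ∈ W i).card : ℤ) * (I.filter fun i => x ∉ W i).card ≤ t * I.card := by
  have hsum := Finset.card_filter_add_card_filter_not (s := I) (fun i => x ∈ W i)
  set e := (I.filter fun i => x ∈ W i).card with he
  set f := (I.filter fun i => x ∉ W i).card with hf
  have key := sum_sq_eq I W l t hcard hint (fun i => if x ∈ W i then (f : ℤ) else -e)
  have s1 : ∑ i ∈ I, (if x ∈ W i then (f : ℤ) else -e) = 0 := by
    rw [Finset.sum_ite]
    simp only [Finset.sum_const, ← he, ← hf, nsmul_eq_mul]
    ring
  have s2 : ∑ i ∈ I, (if x ∈ W i then (f : ℤ) else -e) ^ 2 = e * f * I.card := by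
    have : ∀ i ∈ I, (if x ∈ W i then (f : ℤ) else -e) ^ 2
        = if x ∈ W i then (f : ℤ) ^ 2 else (e : ℤ) ^ 2 := by
      intro i _
      split_ifs <;> ring
    rw [Finset.sum_congr rfl this, Finset.sum_ite]
    simp only [Finset.sum_const, ← he, ← hf, nsmul_eq_mul, ← hsum]
    push_cast
    ring
  have s3 : ∑ i ∈ I, (if x ∈ W i then (if x ∈ W i then (f : ℤ) else -e) else 0) = e * f := by
    have : ∀ i ∈ I, (if x ∈ W i then (if x ∈ W i then (f : ℤ) else -e) else 0)
        = if x ∈ W i then (f : ℤ) else 0 := by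
      intro i _
      split_ifs <;> rfl
    rw [Finset.sum_congr rfl this, Finset.sum_ite]
    simp [← he]
  have s4 := Finset.single_le_sum (f := fun y : V =>
    (∑ i ∈ I, if y ∈ W i then (if x ∈ W i then (f : ℤ) else -e) else 0) ^ 2)
    (fun y _ => sq_nonneg _) (Finset.mem_univ x)
  simp only [s3] at s4
  rw [key, s1, s2] at s4
  rcases Nat.eq_zero_or_pos (e * f) with h0 | h0
  · have : (e : ℤ) * f = 0 := by exact_mod_cast h0
    rw [this]
    positivity
  · have h0' : (0 : ℤ) < e * f := by exact_mod_cast h0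
    refine le_of_mul_le_mul_left ?_ h0'
    nlinarith [s4]

/-- A form of Deza's theorem: a large family of `(l + t)`-sets with all pairwise intersections of
size `l ≤ t` has a common core of size `l`. -/
lemma exists_core {ι V : Type*} [DecidableEq ι] [DecidableEq V] [Fintype V]
    (I : Finset ι) (W : ι → Finset V) (l t : ℕ) (hl : l ≤ t)
    (hm : 4 * t ^ 2 + 2 * t + 2 ≤ I.card)
    (hcard : ∀ i ∈ I, (W i).card = l + t)
    (hint : ∀ i ∈ I, ∀ j ∈ I, i ≠ j → (W i ∩ W j).card = l) :
    ∃ K : Finset V, K.card = l ∧ ∀ i ∈ I, K ⊆ W i := by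
  have hdich : ∀ x : V, (I.filter fun i => x ∈ W i).card ≤ t ∨
      (I.filter fun i => x ∉ W i).card ≤ t := by
    intro x
    by_contra! hcon
    have h1 := degree_mul_le I W l t hcard hint x
    have hsum := Finset.card_filter_add_card_filter_not (s := I) (fun i => x ∈ W i)
    generalize (I.filter fun i => x ∈ W i).card = e at *
    generalize (I.filter fun i => x ∉ W i).card = f at *
    obtain ⟨he, hf⟩ := hcon
    rw [← hsum] at h1 hm
    obtain ⟨a, rfl⟩ := Nat.exists_eq_add_of_lt he
    obtain ⟨b, rfl⟩ := Nat.exists_eq_add_of_lt hf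
    norm_cast at h1
    nlinarith [Nat.zero_le (a * b)]
  let K : Finset V := Finset.univ.filter fun x => (I.filter fun i => x ∉ W i).card ≤ t
  have hKcard : K.card ≤ l := by
    by_contra! hcon
    obtain ⟨K', hK', hK'c⟩ := Finset.exists_subset_card_eq (Nat.succ_le_of_lt hcon)
    -- at most `(l + 1) t` sets miss a point of `K'`, so two distinct sets contain `K'`
    have hbad : (K'.biUnion fun x => I.filter fun i => x ∉ W i).card ≤ K'.card * t :=
      Finset.card_biUnion_le_card_mul _ _ _ fun x hx => (Finset.mem_filter.1 (hK' hx)).2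
    have hgood : 1 < (I \ K'.biUnion fun x => I.filter fun i => x ∉ W i).card := by
      have := Finset.le_card_sdiff (K'.biUnion fun x => I.filter fun i => x ∉ W i) I
      have h2 : K'.card * t ≤ (t + 1) * t := by
        rw [hK'c]
        exact Nat.mul_le_mul_right _ (Nat.succ_le_succ hl)
      have h3 : (t + 1) * t + 2 ≤ I.card := by nlinarith
      omega
    obtain ⟨i, hi, j, hj, hij⟩ := Finset.one_lt_card.1 hgood
    have hsub : ∀ i ∈ I \ K'.biUnion (fun x => I.filter fun i => x ∉ W i), K' ⊆ W i := by
      intro i hi x hx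
      by_contra hxi
      rw [Finset.mem_sdiff] at hi
      exact hi.2 (Finset.mem_biUnion.2 ⟨x, hx, Finset.mem_filter.2 ⟨hi.1, hxi⟩⟩)
    have := Finset.card_le_card (Finset.subset_inter (hsub i hi) (hsub j hj))
    rw [hint i (Finset.mem_sdiff.1 hi).1 j (Finset.mem_sdiff.1 hj).1 hij, hK'c] at this
    omega
  have hKA : ∀ i ∈ I, l ≤ (K ∩ W i).card := by
    intro i hi
    by_contra! hcon
    -- count the pairs `(x, j)` with `x ∈ W i ∩ W j`
    have hdc : ∑ x ∈ W i, (I.filter fun j => x ∈ W j).card = ∑ j ∈ I, (W i ∩ W j).card := by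
      have := Finset.sum_card_bipartiteAbove_eq_sum_card_bipartiteBelow
        (s := W i) (t := I) (fun x j => x ∈ W j)
      simpa [Finset.bipartiteAbove, Finset.bipartiteBelow, Finset.filter_mem_eq_inter] using this
    have hlow : I.card * l ≤ ∑ j ∈ I, (W i ∩ W j).card := by
      rw [← smul_eq_mul]
      refine Finset.card_nsmul_le_sum _ _ _ fun j hj => ?_
      by_cases hij : i = j
      · subst hij
        simp [hcard i hi]
      · exact (hint i hi j hj hij).ge
    have hup : ∑ x ∈ W i, (I.filter fun j => x ∈ W j).card
        ≤ ∑ x ∈ W i, ((if x ∈ K then I.card else 0) + t) := by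
      refine Finset.sum_le_sum fun x _ => ?_
      split_ifs with hx
      · exact (Finset.card_filter_le _ _).trans (Nat.le_add_right _ _)
      · rcases hdich x with h | h
        · omega
        · exact absurd (Finset.mem_filter.2 ⟨Finset.mem_univ x, h⟩) hx
    rw [Finset.sum_add_distrib, ← Finset.sum_filter, Finset.sum_const, Finset.sum_const,
      Finset.filter_mem_eq_inter, Finset.inter_comm, hcard i hi, smul_eq_mul, smul_eq_mul] at hup
    have h5 : I.card * l ≤ (K ∩ W i).card * I.card + (l + t) * t := by omega
    have h6 : ((K ∩ W i).card + 1) * I.card ≤ l * I.card := Nat.mul_le_mul_right _ hcon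
    have h7 : l * t ≤ t * t := Nat.mul_le_mul_right _ hl
    nlinarith
  refine ⟨K, ?_, fun i hi => ?_⟩
  · obtain ⟨i, hi⟩ : I.Nonempty := Finset.card_pos.1 (by omega)
    exact le_antisymm hKcard ((hKA i hi).trans (Finset.card_le_card Finset.inter_subset_left))
  · have := Finset.eq_of_subset_of_card_le (Finset.inter_subset_left (s₁ := K) (s₂ := W i))
      (hKcard.trans (hKA i hi))
    rw [← this]
    exact Finset.inter_subset_right

/-- The petals of a sunflower with core `K` are disjoint, so if it has more petals than `C` has
elements, then some member meets `C` only inside `K`. -/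
lemma exists_inter_subset_core {ι V : Type*} [DecidableEq V]
    (I : Finset ι) (W : ι → Finset V) (l : ℕ)
    (hint : ∀ i ∈ I, ∀ j ∈ I, i ≠ j → (W i ∩ W j).card = l)
    (K C : Finset V) (hK : K.card = l) (hKW : ∀ i ∈ I, K ⊆ W i) (hC : C.card < I.card) :
    ∃ i ∈ I, W i ∩ C ⊆ K := by
  by_contra! hcon
  have hex : ∀ i : ι, ∃ x : V, i ∈ I → x ∈ W i ∧ x ∈ C ∧ x ∉ K := by
    intro i
    by_cases hi : i ∈ I
    · obtain ⟨x, hx, hxK⟩ := Finset.not_subset.1 (hcon i hi)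
      rw [Finset.mem_inter] at hx
      exact ⟨x, fun _ => ⟨hx.1, hx.2, hxK⟩⟩
    · obtain ⟨j, hj⟩ : I.Nonempty := Finset.card_pos.1 (by omega)
      obtain ⟨x, -, -⟩ := Finset.not_subset.1 (hcon j hj)
      exact ⟨x, fun h => absurd h hi⟩
  choose g hg using hex
  obtain ⟨i, hi, j, hj, hij, hgij⟩ :=
    Finset.exists_ne_map_eq_of_card_lt_of_maps_to hC (f := g) (fun i hi => (hg i hi).2.1)
  have hKint : K = W i ∩ W j :=
    Finset.eq_of_subset_of_card_le (Finset.subset_inter (hKW i hi) (hKW j hj))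
      (by rw [hint i hi j hj hij, hK])
  apply (hg i hi).2.2
  rw [hKint, Finset.mem_inter]
  exact ⟨(hg i hi).1, hgij ▸ (hg j hj).1⟩

lemma hammingDist_add_inter {n d : ℕ} (S : Fin n → Fin d → Bool) (i j : Fin n) :
    hammingDist (S i) (S j) + 2 * (rowSupport S i ∩ rowSupport S j).card
      = (rowSupport S i).card + (rowSupport S j).card := by
  simp only [hammingDist, rowSupport, ← Finset.filter_and, Finset.card_filter]
  rw [Finset.mul_sum, ← Finset.sum_add_distrib, ← Finset.sum_add_distrib]
  refine Finset.sum_congr rfl fun c _ => ?_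
  cases S i c <;> cases S j c <;> simp

theorem stmt13 {n d : ℕ} (α : ℕ) (hα : 1 ≤ α) (hodd : Odd α)
    (S : Fin n → Fin d → Bool)
    (hrows : ∀ i j : Fin n, i ≠ j → S i ≠ S j)
    (i₀ : Fin n) (hzero : ∀ c, S i₀ c = false)
    (hham : ∀ i j : Fin n, i ≠ j →
      hammingDist (S i) (S j) = α ∨ hammingDist (S i) (S j) = α + 1 ∨
        hammingDist (S i) (S j) = α + 2) :
    (((α + 2) ^ 2 - (α + 2) + 2 ≤
        (Finset.univ.filter fun i : Fin n => (rowSupport S i).card = α).card) →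
      (Finset.univ.filter fun i : Fin n => (rowSupport S i).card = α + 2).card = 0) ∧
    (3 ≤ α → (∀ j : Fin d, ¬ Inessential S j) →
      ¬ ((α + 2) ^ 2 - (α + 2) + 2 ≤
          (Finset.univ.filter fun i : Fin n => (rowSupport S i).card = α).card ∧
        (α + 2) ^ 2 - (α + 2) + 2 ≤
          (Finset.univ.filter fun i : Fin n => (rowSupport S i).card = α + 1).card)) := by
  obtain ⟨s, hs⟩ := hodd
  have hpow : (α + 2) ^ 2 - (α + 2) + 2 = 4 * (s + 1) ^ 2 + 2 * (s + 1) + 2 := by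
    have : (α + 2) ^ 2 = 4 * (s + 1) ^ 2 + 2 * (s + 1) + (α + 2) := by
      subst hs
      ring
    omega
  rw [hpow]
  have hwt : ∀ i, i ≠ i₀ → (rowSupport S i).card = α ∨ (rowSupport S i).card = α + 1 ∨
      (rowSupport S i).card = α + 2 := by
    intro i hi
    have h0 : rowSupport S i₀ = ∅ := by simp [rowSupport, hzero]
    have h1 := hammingDist_add_inter S i i₀
    have h2 := hham i i₀ hi
    simp only [h0, Finset.inter_empty, Finset.card_empty] at h1
    omega
  -- with `t = s + 1`: rows of weight `α` meet pairwise in `s = t - 1` columns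
  have hA : ∀ i ∈ (Finset.univ.filter fun i : Fin n => (rowSupport S i).card = α),
      ∀ j ∈ (Finset.univ.filter fun i : Fin n => (rowSupport S i).card = α), i ≠ j →
        (rowSupport S i ∩ rowSupport S j).card = s := by
    intro i hi j hj hij
    have h1 := hammingDist_add_inter S i j
    have h2 := hham i j hij
    rw [(Finset.mem_filter.1 hi).2, (Finset.mem_filter.1 hj).2] at h1
    omega
  have hcoreA : 4 * (s + 1) ^ 2 + 2 * (s + 1) + 2 ≤
      (Finset.univ.filter fun i : Fin n => (rowSupport S i).card = α).card →
      ∃ K : Finset (Fin d), K.card = s ∧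
        ∀ i ∈ (Finset.univ.filter fun i : Fin n => (rowSupport S i).card = α),
          K ⊆ rowSupport S i := fun hm =>
    exists_core _ (rowSupport S) s (s + 1) (Nat.le_succ s) hm
      (fun i hi => by rw [(Finset.mem_filter.1 hi).2]; omega) hA
  have part1 : 4 * (s + 1) ^ 2 + 2 * (s + 1) + 2 ≤
      (Finset.univ.filter fun i : Fin n => (rowSupport S i).card = α).card →
      ∀ r, (rowSupport S r).card ≠ α + 2 := by
    intro hm r hr
    obtain ⟨K, hKc, hK⟩ := hcoreA hm
    obtain ⟨i, hi, hsub⟩ := exists_inter_subset_core _ (rowSupport S) s hA K (rowSupport S r)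
      hKc hK (by nlinarith)
    have hle := Finset.card_le_card hsub
    have hiw := (Finset.mem_filter.1 hi).2
    have hir : i ≠ r := by
      rintro rfl
      omega
    have h1 := hammingDist_add_inter S i r
    have h2 := hham i r hir
    omega
  refine ⟨fun hm => ?_, ?_⟩
  · rw [Finset.card_eq_zero, Finset.filter_eq_empty_iff]
    exact fun r _ => part1 hm r
  rintro h3 hess ⟨hm, -⟩
  obtain ⟨K, hKc, hK⟩ := hcoreA hm
  have hall : ∀ r, r ≠ i₀ → K ⊆ rowSupport S r := by
    intro r hr
    rcases hwt r hr with h | h | h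
    · exact hK r (Finset.mem_filter.2 ⟨Finset.mem_univ r, h⟩)
    · obtain ⟨i, hi, hsub⟩ := exists_inter_subset_core _ (rowSupport S) s hA K (rowSupport S r)
        hKc hK (by nlinarith)
      have hiw := (Finset.mem_filter.1 hi).2
      have hir : i ≠ r := by
        rintro rfl
        omega
      have h1 := hammingDist_add_inter S i r
      have h2 := hham i r hir
      have heq := Finset.eq_of_subset_of_card_le hsub (by omega)
      rw [← heq]
      exact Finset.inter_subset_right
    · exact absurd h (part1 hm r)
  obtain ⟨y, hy⟩ : K.Nonempty := Finset.card_pos.1 (by omega)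
  have hone : ∀ r, r ≠ i₀ → S r y = true := fun r hr =>
    (Finset.mem_filter.1 (hall r hr hy)).2
  refine hess y ⟨⟨i₀, fun l hl => ?_, fun l l' hl hl' => ?_⟩, fun i i' hii => ?_⟩
  · rw [hzero, hone l hl]
    decide
  · rw [hone l hl, hone l' hl']
  · have h2 : 1 < hammingDist (S i) (S i') := by
      have := hham i i' hii
      omega
    obtain ⟨c, hc, hcy⟩ := Finset.exists_mem_ne h2 y
    exact ⟨c, hcy, (Finset.mem_filter.1 hc).2⟩
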